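/- arXiv:2312.15232 — 5 statements merged into one kernel-verified Lean document; each statement's English description precedes it below -/
import Mathlib

section
/- Let $G \subsetneq \mathbb{R}^n$ be a domain, let $\alpha > 0$ and $\beta \neq 0$ be real numbers, and define $u(x) = \alpha \, d(x, \partial G)^{\beta}$ for $x \in G$, where $d(x, \partial G)$ is the Euclidean distance from $x$ to the boundary of $G$. Then for every $s \in (0,1)$, the function $u$ satisfies the $(s, C(s))$-Harnack inequality in $G$ with $C(s) = \left(\frac{1+s}{1-s}\right)^{|\beta|}$. -/
open Metric Set

/-- A continuous function `u : G → [0,∞)` satisfies the `(s, C)`-Harnack inequality in `G`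
if for every `x ∈ G` and every `r > 0` with `B(x,r) ⊆ G`, the maximum of `u` over the closed
ball `B̄(x, s r)` is at most `C` times the minimum of `u` over that closed ball; equivalently,
`u z₁ ≤ C * u z₂` for all `z₁, z₂` in the closed ball. -/
def SatisfiesHarnack {n : ℕ} (u : EuclideanSpace ℝ (Fin n) → ℝ)
    (G : Set (EuclideanSpace ℝ (Fin n))) (s C : ℝ) : Prop :=
  ∀ x ∈ G, ∀ r > (0 : ℝ), ball x r ⊆ G →
    ∀ z₁ ∈ closedBall x (s * r), ∀ z₂ ∈ closedBall x (s * r), u z₁ ≤ C * u z₂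

/-- For a domain `G ⊊ ℝⁿ`, `α > 0`, `β ≠ 0`, the function
`u(x) = α · d(x, ∂G)^β` satisfies the `(s, C(s))`-Harnack inequality in `G` with
`C(s) = ((1+s)/(1-s))^{|β|}`, for every `s ∈ (0,1)`. -/
theorem stmt_0 {n : ℕ} (G : Set (EuclideanSpace ℝ (Fin n)))
    (hGopen : IsOpen G) (hGconn : IsConnected G) (hGne : G ≠ univ)
    (α β : ℝ) (hα : 0 < α) (hβ : β ≠ 0) (s : ℝ) (hs : s ∈ Ioo (0 : ℝ) 1) :
    SatisfiesHarnack (fun x => α * Metric.infDist x (frontier G) ^ β) G s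
      (((1 + s) / (1 - s)) ^ |β|) := by
  obtain ⟨hs0, hs1⟩ := hs
  intro x hx r hr hball z₁ hz₁ z₂ hz₂
  have hne : (frontier G).Nonempty := by
    rw [nonempty_frontier_iff]
    exact ⟨hGconn.nonempty, hGne⟩
  have hd : r ≤ infDist x (frontier G) := by
    rw [le_infDist hne]
    intro y hy
    by_contra hlt
    have hyG : y ∈ G := hball (by rw [mem_ball, dist_comm]; exact not_le.mp hlt)
    rw [hGopen.frontier_eq] at hy
    exact hy.2 hyG
  have key : ∀ z ∈ closedBall x (s * r),
      (1 - s) * infDist x (frontier G) ≤ infDist z (frontier G) ∧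
      infDist z (frontier G) ≤ (1 + s) * infDist x (frontier G) := by
    intro z hz
    have h1 : dist z x ≤ s * r := mem_closedBall.mp hz
    have h2 := infDist_le_infDist_add_dist (s := frontier G) (x := z) (y := x)
    have h3 := infDist_le_infDist_add_dist (s := frontier G) (x := x) (y := z)
    rw [dist_comm x z] at h3
    have h4 := mul_le_mul_of_nonneg_left hd hs0.le
    constructor <;> linarith
  obtain ⟨l1, u1⟩ := key z₁ hz₁
  obtain ⟨l2, u2⟩ := key z₂ hz₂
  generalize infDist x (frontier G) = d at *
  have hd0 : 0 < d := lt_of_lt_of_le hr hd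
  have h1s : 0 < 1 - s := by linarith
  have hK : 0 < (1 + s) / (1 - s) := by positivity
  have hKm : (1 + s) / (1 - s) * ((1 - s) * d) = (1 + s) * d := by
    field_simp
  have hp : 0 < (1 - s) * d := mul_pos h1s hd0
  show α * infDist z₁ (frontier G) ^ β ≤ _ * (α * infDist z₂ (frontier G) ^ β)
  generalize infDist z₁ (frontier G) = a at *
  generalize infDist z₂ (frontier G) = b at *
  generalize (1 + s) / (1 - s) = K at *
  have ha : 0 < a := by linarith
  have hb : 0 < b := by linarith
  have hab : a ≤ K * b := by
    have := mul_le_mul_of_nonneg_left l2 hK.le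
    linarith
  have hba : b ≤ K * a := by
    have := mul_le_mul_of_nonneg_left l1 hK.le
    linarith
  have main : a ^ β ≤ K ^ |β| * b ^ β := by
    rcases lt_or_gt_of_ne hβ with h | h
    · rw [abs_of_neg h]
      have h5 : (K * a) ^ β ≤ b ^ β := Real.rpow_le_rpow_of_nonpos hb hba h.le
      rw [Real.mul_rpow hK.le ha.le] at h5
      have h6 := mul_le_mul_of_nonneg_left h5 (Real.rpow_nonneg hK.le (-β))
      rwa [← mul_assoc, ← Real.rpow_add hK, neg_add_cancel, Real.rpow_zero, one_mul] at h6
    · rw [abs_of_pos h, ← Real.mul_rpow hK.le hb.le]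
      exact Real.rpow_le_rpow ha.le hab h.le
  have := mul_le_mul_of_nonneg_left main hα.le
  linarith
end

section
/- Let $s \in (0,1)$, $C \geq 1$, and let $u : \mathbb{B}^n \to (0,\infty)$ be a continuous function satisfying the $(s, C)$-Harnack inequality in the unit ball $\mathbb{B}^n$. Then for all $x, y \in \mathbb{B}^n$, $u(x) \leq C^{1+t}\, u(y)$, where $t = \frac{\log((1+r)/(1-r))}{\log((1+s)/(1-s))}$ and $r = \tanh(\rho_{\mathbb{B}^n}(x,y)/2)$, with $\rho_{\mathbb{B}^n}$ the hyperbolic distance of the unit ball. -/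
open Metric Set

/-- The hyperbolic distance of the unit ball `𝔹ⁿ`, determined by
`sinh²(ρ(x,y)/2) = |x-y|² / ((1-|x|²)(1-|y|²))`. -/
noncomputable def rhoB {n : ℕ} (x y : EuclideanSpace ℝ (Fin n)) : ℝ :=
  2 * Real.arsinh (‖x - y‖ / Real.sqrt ((1 - ‖x‖ ^ 2) * (1 - ‖y‖ ^ 2)))

theorem aux_pos {n : ℕ} {x : EuclideanSpace ℝ (Fin n)} (hx : ‖x‖ < 1) : 0 < 1 - ‖x‖ ^ 2 := by
  nlinarith [norm_nonneg x]

theorem aux_rho_nonneg {n : ℕ} (x y : EuclideanSpace ℝ (Fin n)) : 0 ≤ rhoB x y := by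
  unfold rhoB
  have : 0 ≤ Real.arsinh (‖x - y‖ / Real.sqrt ((1 - ‖x‖ ^ 2) * (1 - ‖y‖ ^ 2))) :=
    Real.arsinh_nonneg_iff.2 (by positivity)
  linarith

theorem aux_cosh {n : ℕ} {x y : EuclideanSpace ℝ (Fin n)} (hx : ‖x‖ < 1) (hy : ‖y‖ < 1) :
    Real.cosh (rhoB x y) = 1 + 2 * ‖x - y‖ ^ 2 / ((1 - ‖x‖ ^ 2) * (1 - ‖y‖ ^ 2)) := by
  have h1 := aux_pos hx
  have h2 := aux_pos hy
  unfold rhoB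
  rw [Real.cosh_two_mul, Real.cosh_sq, Real.sinh_arsinh, div_pow, Real.sq_sqrt (by positivity)]
  ring

theorem aux_cosh' {n : ℕ} {x y : EuclideanSpace ℝ (Fin n)} (hx : ‖x‖ < 1) (hy : ‖y‖ < 1) :
    Real.cosh (rhoB x y) = ((1 + ‖x‖ ^ 2) / (1 - ‖x‖ ^ 2)) * ((1 + ‖y‖ ^ 2) / (1 - ‖y‖ ^ 2))
      - inner ℝ ((2 / (1 - ‖x‖ ^ 2)) • x) ((2 / (1 - ‖y‖ ^ 2)) • y) := by
  have h1 := aux_pos hx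
  have h2 := aux_pos hy
  rw [aux_cosh hx hy, norm_sub_sq_real, real_inner_smul_left, real_inner_smul_right]
  field_simp
  ring

theorem aux_lift {n : ℕ} (p : ℝ) (v : EuclideanSpace ℝ (Fin n)) (hp : 0 < p)
    (h : p ^ 2 - ‖v‖ ^ 2 = 1) : ∃ z : EuclideanSpace ℝ (Fin n), ‖z‖ < 1 ∧
      (1 + ‖z‖ ^ 2) / (1 - ‖z‖ ^ 2) = p ∧ (2 / (1 - ‖z‖ ^ 2)) • z = v := by
  have hz : ‖(1 / (1 + p)) • v‖ ^ 2 = (p - 1) / (p + 1) := by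
    rw [norm_smul, mul_pow, Real.norm_eq_abs, sq_abs,
      show ‖v‖ ^ 2 = (p - 1) * (p + 1) by linarith]
    field_simp
    ring
  have h1 : 1 - (p - 1) / (p + 1) = 2 / (p + 1) := by field_simp; ring
  refine ⟨(1 / (1 + p)) • v, ?_, ?_, ?_⟩
  · have : 0 < 2 / (p + 1) := by positivity
    nlinarith [norm_nonneg ((1 / (1 + p)) • v)]
  · rw [hz, h1]; field_simp; ring
  · rw [hz, h1, smul_smul]
    rw [show 2 / (2 / (p + 1)) * (1 / (1 + p)) = 1 by field_simp; ring, one_smul]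

theorem aux_norm_V {n : ℕ} {x : EuclideanSpace ℝ (Fin n)} (hx : ‖x‖ < 1) :
    ((1 + ‖x‖ ^ 2) / (1 - ‖x‖ ^ 2)) ^ 2 - ‖(2 / (1 - ‖x‖ ^ 2)) • x‖ ^ 2 = 1 := by
  have h1 := aux_pos hx
  rw [norm_smul, mul_pow, Real.norm_eq_abs, sq_abs]
  field_simp
  ring

theorem aux_eq {n : ℕ} {x y : EuclideanSpace ℝ (Fin n)} (hx : ‖x‖ < 1) (hy : ‖y‖ < 1)
    (h : rhoB x y = 0) : x = y := by
  have h1 := aux_pos hx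
  have h2 := aux_pos hy
  have h3 := aux_cosh hx hy
  rw [h, Real.cosh_zero] at h3
  have h4 : 2 * ‖x - y‖ ^ 2 / ((1 - ‖x‖ ^ 2) * (1 - ‖y‖ ^ 2)) = 0 := by linarith
  rw [div_eq_zero_iff] at h4
  have h5 : 0 < (1 - ‖x‖ ^ 2) * (1 - ‖y‖ ^ 2) := by positivity
  rcases h4 with h4 | h4
  · have : ‖x - y‖ = 0 := by
      have : ‖x - y‖ ^ 2 = 0 := by linarith
      exact pow_eq_zero_iff (two_ne_zero) |>.1 this
    exact sub_eq_zero.1 (norm_eq_zero.1 this)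
  · linarith

theorem aux_self {n : ℕ} (x : EuclideanSpace ℝ (Fin n)) : rhoB x x = 0 := by
  simp [rhoB]

theorem aux_cosh_inj {a b : ℝ} (ha : 0 ≤ a) (hb : 0 ≤ b) (h : Real.cosh a = Real.cosh b) :
    a = b := by
  have h1 := Real.cosh_le_cosh.1 h.le
  have h2 := Real.cosh_le_cosh.1 h.ge
  rw [abs_of_nonneg ha, abs_of_nonneg hb] at h1 h2
  exact le_antisymm h1 h2

theorem aux_between {n : ℕ} {x y : EuclideanSpace ℝ (Fin n)} (hx : ‖x‖ < 1) (hy : ‖y‖ < 1)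
    {a b : ℝ} (ha : 0 ≤ a) (hb : 0 ≤ b) (h : rhoB x y = a + b) :
    ∃ z : EuclideanSpace ℝ (Fin n), ‖z‖ < 1 ∧ rhoB x z = a ∧ rhoB z y = b := by
  rcases (add_nonneg ha hb).eq_or_lt with h0 | h0
  · have : x = y := aux_eq hx hy (by linarith)
    subst this
    exact ⟨x, hx, by rw [aux_self]; linarith, by rw [aux_self]; linarith⟩
  have hc := aux_cosh' hx hy
  have hX := aux_norm_V hx
  have hY := aux_norm_V hy
  have hP : 0 < (1 + ‖x‖ ^ 2) / (1 - ‖x‖ ^ 2) := div_pos (by positivity) (aux_pos hx)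
  have hQ : 0 < (1 + ‖y‖ ^ 2) / (1 - ‖y‖ ^ 2) := div_pos (by positivity) (aux_pos hy)
  have hcx := fun z (hz : ‖z‖ < 1) => aux_cosh' hx hz
  have hcy := fun z (hz : ‖z‖ < 1) => aux_cosh' hz hy
  generalize (1 + ‖x‖ ^ 2) / (1 - ‖x‖ ^ 2) = P at *
  generalize (1 + ‖y‖ ^ 2) / (1 - ‖y‖ ^ 2) = Q at *
  generalize (2 / (1 - ‖x‖ ^ 2)) • x = X at *
  generalize (2 / (1 - ‖y‖ ^ 2)) • y = Y at *
  rw [h] at hc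
  have hS : 0 < Real.sinh (a + b) := Real.sinh_pos_iff.2 h0
  have hA : 0 ≤ Real.sinh a := Real.sinh_nonneg_iff.2 ha
  have hB : 0 ≤ Real.sinh b := Real.sinh_nonneg_iff.2 hb
  have e1 : Real.sinh b = Real.sinh (a + b) * Real.cosh a - Real.cosh (a + b) * Real.sinh a := by
    rw [← Real.sinh_sub]; congr 1; ring
  have e2 : Real.sinh a = Real.sinh (a + b) * Real.cosh b - Real.cosh (a + b) * Real.sinh b := by
    rw [← Real.sinh_sub]; congr 1; ring
  have e3 := Real.cosh_sq a
  have e4 := Real.sinh_add a b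
  set S := Real.sinh (a + b)
  set K := Real.cosh (a + b)
  set A := Real.sinh a
  set B := Real.sinh b
  have hXY : inner ℝ X Y = P * Q - K := by linarith
  have hXX : inner ℝ X X = P ^ 2 - 1 := by rw [real_inner_self_eq_norm_sq]; linarith
  have hYY : inner ℝ Y Y = Q ^ 2 - 1 := by rw [real_inner_self_eq_norm_sq]; linarith
  have hYX : inner ℝ Y X = P * Q - K := by rw [real_inner_comm]; exact hXY
  obtain ⟨z, hz, hzp, hzv⟩ := aux_lift ((B / S) * P + (A / S) * Q) ((B / S) • X + (A / S) • Y)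
    (by
      have : 0 < A + B := by
        rcases hA.eq_or_lt with h1 | h1
        · rcases hB.eq_or_lt with h2 | h2
          · rw [← h1, ← h2] at e4; simp at e4; linarith
          · linarith
        · linarith
      rcases hA.eq_or_lt with h1 | h1
      · have : 0 < B := by linarith
        positivity
      · positivity)
    (by
      rw [← real_inner_self_eq_norm_sq]
      simp only [inner_add_left, inner_add_right, real_inner_smul_left, real_inner_smul_right,
        hXX, hXY, hYX, hYY]
      have : B ^ 2 + A ^ 2 + 2 * A * B * K = S ^ 2 := by
        linear_combination (B + A * K + S * Real.cosh a) * e1 + S ^ 2 * e3 - A ^ 2 * Real.cosh_sq (a+b)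
      field_simp
      linear_combination this)
  refine ⟨z, hz, aux_cosh_inj (aux_rho_nonneg _ _) ha ?_,
    aux_cosh_inj (aux_rho_nonneg _ _) hb ?_⟩
  · rw [hcx z hz, hzp, hzv]
    simp only [inner_add_right, real_inner_smul_right, hXX, hXY]
    field_simp
    linear_combination e1
  · rw [hcy z hz, hzp, hzv]
    simp only [inner_add_left, real_inner_smul_left, hYY, hXY]
    field_simp
    linear_combination e2

theorem aux_ball {n : ℕ} {x m : EuclideanSpace ℝ (Fin n)} (hx : ‖x‖ < 1) (hm : ‖m‖ < 1)
    {R : ℝ} (hR : 0 ≤ R) (h : rhoB x m ≤ R) :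
    ‖x - (1 / (1 + (Real.cosh R - 1) * (1 - ‖m‖ ^ 2) / 2)) • m‖ ≤
      Real.tanh R * (1 - ‖(1 / (1 + (Real.cosh R - 1) * (1 - ‖m‖ ^ 2) / 2)) • m‖) := by
  have h1 := aux_pos hx
  have h2 := aux_pos hm
  have hc : Real.cosh (rhoB x m) ≤ Real.cosh R := by
    rw [Real.cosh_le_cosh, abs_of_nonneg hR, abs_of_nonneg (aux_rho_nonneg _ _)]; exact h
  rw [aux_cosh hx hm] at hc
  have hh := Real.one_le_cosh R
  have hS : 0 ≤ Real.sinh R := Real.sinh_nonneg_iff.2 hR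
  have e := Real.cosh_sq R
  rw [Real.tanh_eq_sinh_div_cosh]
  set H := Real.cosh R
  set S := Real.sinh R
  have hc' : 2 * ‖x - m‖ ^ 2 ≤ (H - 1) * ((1 - ‖x‖ ^ 2) * (1 - ‖m‖ ^ 2)) := by
    rw [← div_le_iff₀ (by positivity)]; linarith
  set k := 1 + (H - 1) * (1 - ‖m‖ ^ 2) / 2 with hk
  have hk1 : 1 ≤ k := by
    have : 0 ≤ (H - 1) * (1 - ‖m‖ ^ 2) := mul_nonneg (by linarith) h2.le
    linarith
  have hk0 : 0 < k := by linarith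
  have hn : ‖(1 / k) • m‖ = ‖m‖ / k := by
    rw [norm_smul, Real.norm_eq_abs, abs_of_pos (by positivity)]; ring
  rw [hn]
  have hm0 := norm_nonneg m
  have key1 : ‖x - (1 / k) • m‖ ≤ (1 - ‖m‖ ^ 2) * S / 2 / k := by
    refine (sq_le_sq₀ (norm_nonneg _) (by positivity)).1 ?_
    rw [norm_sub_sq_real, hn, real_inner_smul_right]
    rw [norm_sub_sq_real] at hc'
    have : k ^ 2 * (‖x‖ ^ 2 - 2 * (1 / k * inner ℝ x m) + (‖m‖ / k) ^ 2) ≤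
        k ^ 2 * ((1 - ‖m‖ ^ 2) * S / 2 / k) ^ 2 := by
      have l : k ^ 2 * (‖x‖ ^ 2 - 2 * (1 / k * inner ℝ x m) + (‖m‖ / k) ^ 2) =
        k * (k * ‖x‖ ^ 2 - 2 * inner ℝ x m + ‖m‖ ^ 2) + ‖m‖ ^ 2 * (1 - k) := by field_simp; ring
      have r : k ^ 2 * ((1 - ‖m‖ ^ 2) * S / 2 / k) ^ 2 =
        (1 - ‖m‖ ^ 2) ^ 2 * (H ^ 2 - 1) / 4 := by
          rw [e]; field_simp; ring
      rw [l, r]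
      have q : k * ‖x‖ ^ 2 - 2 * inner ℝ x m + ‖m‖ ^ 2 ≤ k - 1 := by
        rw [hk]; linarith
      have := mul_le_mul_of_nonneg_left q hk0.le
      have t : k * (k - 1) + ‖m‖ ^ 2 * (1 - k) = (1 - ‖m‖ ^ 2) ^ 2 * (H ^ 2 - 1) / 4 := by
        rw [hk]; ring
      linarith
    exact le_of_mul_le_mul_left this (by positivity)
  refine key1.trans ?_
  have hH : 0 < H := by linarith
  have : S / H * (1 - ‖m‖ / k) - (1 - ‖m‖ ^ 2) * S / 2 / k = S / (H * k) * ((1 - ‖m‖) ^ 2 / 2) := by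
    have : k - ‖m‖ - H * (1 - ‖m‖ ^ 2) / 2 = (1 - ‖m‖) ^ 2 / 2 := by rw [hk]; ring
    rw [← this]
    field_simp
  have : 0 ≤ S / (H * k) * ((1 - ‖m‖) ^ 2 / 2) := by positivity
  linarith

theorem aux_step {n : ℕ} {s C : ℝ} {u : EuclideanSpace ℝ (Fin n) → ℝ}
    (hHar : SatisfiesHarnack u (ball (0 : EuclideanSpace ℝ (Fin n)) 1) s C)
    {R : ℝ} (hR : 0 ≤ R) (hs : Real.tanh R = s)
    {x y : EuclideanSpace ℝ (Fin n)} (hx : ‖x‖ < 1) (hy : ‖y‖ < 1) (h : rhoB x y ≤ 2 * R) :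
    u x ≤ C * u y := by
  have h0 := aux_rho_nonneg x y
  obtain ⟨m, hm, h1, h2⟩ := aux_between hx hy (a := rhoB x y / 2) (b := rhoB x y / 2)
    (by linarith) (by linarith) (by ring)
  have hcomm : rhoB y m = rhoB m y := by
    unfold rhoB; rw [norm_sub_rev, mul_comm (1 - ‖y‖ ^ 2)]
  have b1 := aux_ball hx hm hR (by linarith)
  have b2 := aux_ball hy hm hR (by linarith)
  rw [hs] at b1 b2
  have hk1 : 1 ≤ 1 + (Real.cosh R - 1) * (1 - ‖m‖ ^ 2) / 2 := by
    have : 0 ≤ (Real.cosh R - 1) * (1 - ‖m‖ ^ 2) :=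
      mul_nonneg (by linarith [Real.one_le_cosh R]) (aux_pos hm).le
    linarith
  generalize 1 + (Real.cosh R - 1) * (1 - ‖m‖ ^ 2) / 2 = k at *
  have hc : ‖(1 / k) • m‖ < 1 := by
    have hk0 : 0 < k := by linarith
    rw [norm_smul, Real.norm_eq_abs, abs_of_pos (by positivity)]
    have : 1 / k ≤ 1 := by rw [div_le_one hk0]; exact hk1
    nlinarith [norm_nonneg m]
  refine hHar ((1 / k) • m) (by simpa using hc) (1 - ‖(1 / k) • m‖) (by linarith) ?_ x ?_ y ?_
  · apply ball_subset_ball'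
    rw [dist_zero_right]; linarith
  · rw [mem_closedBall, dist_eq_norm]; exact b1
  · rw [mem_closedBall, dist_eq_norm]; exact b2

theorem aux_chain {n : ℕ} {s C : ℝ} (hC : 1 ≤ C) {u : EuclideanSpace ℝ (Fin n) → ℝ}
    (hHar : SatisfiesHarnack u (ball (0 : EuclideanSpace ℝ (Fin n)) 1) s C)
    {R : ℝ} (hR : 0 ≤ R) (hs : Real.tanh R = s) (N : ℕ) :
    ∀ x y : EuclideanSpace ℝ (Fin n), ‖x‖ < 1 → ‖y‖ < 1 → rhoB x y ≤ N * (2 * R) →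
    u x ≤ C ^ N * u y := by
  induction N with
  | zero =>
    intro x y hx hy h
    have := aux_eq hx hy (le_antisymm (by simpa using h) (aux_rho_nonneg x y))
    simp [this]
  | succ N ih =>
    intro x y hx hy h
    have h0 := aux_rho_nonneg x y
    push_cast at h
    have hN : 0 ≤ (N : ℝ) * (2 * R) := by positivity
    obtain ⟨z, hz, h1, h2⟩ := aux_between hx hy (a := min (rhoB x y) (2 * R))
      (b := rhoB x y - min (rhoB x y) (2 * R)) (le_min h0 (by linarith))
      (by linarith [min_le_left (rhoB x y) (2 * R)]) (by ring)
    have s1 := aux_step hHar hR hs hx hz (by rw [h1]; exact min_le_right _ _)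
    have s2 := ih z y hz hy (by
      rw [h2]
      rcases min_choice (rhoB x y) (2 * R) with e | e <;> rw [e] <;> linarith)
    calc u x ≤ C * u z := s1
      _ ≤ C * (C ^ N * u y) := by gcongr
      _ = C ^ (N + 1) * u y := by ring

theorem aux_log (w : ℝ) : Real.log ((1 + Real.tanh w) / (1 - Real.tanh w)) = 2 * w := by
  have hc := Real.cosh_pos w
  have : (1 + Real.tanh w) / (1 - Real.tanh w) = Real.exp (2 * w) := by
    have h1 : 1 + Real.tanh w = Real.exp w / Real.cosh w := by
      rw [Real.tanh_eq_sinh_div_cosh, ← Real.cosh_add_sinh]; field_simp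
    have h2 : 1 - Real.tanh w = Real.exp (-w) / Real.cosh w := by
      rw [Real.tanh_eq_sinh_div_cosh, ← Real.cosh_sub_sinh]; field_simp
    rw [h1, h2, div_div_div_cancel_right₀ hc.ne', ← Real.exp_sub]
    congr 1; ring
  rw [this, Real.log_exp]

/-- If `u : 𝔹ⁿ → (0,∞)` is continuous and satisfies the `(s, C)`-Harnack inequality in the
unit ball, then for all `x, y ∈ 𝔹ⁿ`, `u x ≤ C^(1+t) · u y` where
`t = log((1+r)/(1-r)) / log((1+s)/(1-s))` and `r = tanh(ρ_{𝔹ⁿ}(x,y)/2)`. -/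
theorem stmt_3 {n : ℕ} (s C : ℝ) (hs : s ∈ Ioo (0 : ℝ) 1) (hC : 1 ≤ C)
    (u : EuclideanSpace ℝ (Fin n) → ℝ)
    (hpos : ∀ z ∈ ball (0 : EuclideanSpace ℝ (Fin n)) 1, 0 < u z)
    (hcont : ContinuousOn u (ball (0 : EuclideanSpace ℝ (Fin n)) 1))
    (hHar : SatisfiesHarnack u (ball (0 : EuclideanSpace ℝ (Fin n)) 1) s C)
    (x y : EuclideanSpace ℝ (Fin n))
    (hx : x ∈ ball (0 : EuclideanSpace ℝ (Fin n)) 1)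
    (hy : y ∈ ball (0 : EuclideanSpace ℝ (Fin n)) 1) :
    u x ≤ C ^ (1 + Real.log ((1 + Real.tanh (rhoB x y / 2)) / (1 - Real.tanh (rhoB x y / 2))) /
        Real.log ((1 + s) / (1 - s))) * u y := by
  obtain ⟨R, hR⟩ : ∃ R, Real.tanh R = s := ⟨Real.artanh s, Real.tanh_artanh ⟨by linarith [hs.1], hs.2⟩⟩
  have hR0 : 0 < R := by
    by_contra hcon
    have h1 := Real.sinh_nonpos_iff.2 (not_lt.1 hcon)
    have h2 := hs.1
    rw [← hR, Real.tanh_eq_sinh_div_cosh] at h2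
    exact absurd h2 (not_lt.2 (div_nonpos_of_nonpos_of_nonneg h1 (Real.cosh_pos R).le))
  rw [aux_log, ← hR, aux_log, mul_div_cancel₀ _ (two_ne_zero)]
  have hx' : ‖x‖ < 1 := by simpa using hx
  have hy' : ‖y‖ < 1 := by simpa using hy
  have h0 := aux_rho_nonneg x y
  have hq : 0 ≤ rhoB x y / (2 * R) := by positivity
  have := aux_chain hC hHar hR0.le hR ⌈rhoB x y / (2 * R)⌉₊ x y hx' hy'
    (by rw [← div_le_iff₀ (by positivity)]; exact Nat.le_ceil _)
  refine this.trans ?_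
  rw [← Real.rpow_natCast]
  refine mul_le_mul_of_nonneg_right ?_ (hpos y hy).le
  exact Real.rpow_le_rpow_of_exponent_le hC (by linarith [Nat.ceil_lt_add_one hq])
end

section
/- Let $x \in \mathbb{B}^n$, $s \in (0,1)$, and let $y \in \mathbb{B}^n$ satisfy $|y - x| = s(1-|x|)$. Then $\rho_{\mathbb{B}^n}(x,y) \geq \log(1+s)$, where $\rho_{\mathbb{B}^n}$ is the hyperbolic distance of the unit ball. -/
open Metric Set

/-- If `x ∈ 𝔹ⁿ`, `s ∈ (0,1)` and `y ∈ 𝔹ⁿ` satisfies `|y-x| = s(1-|x|)`, then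
`ρ_{𝔹ⁿ}(x,y) ≥ log(1+s)`. -/
theorem stmt_5 {n : ℕ} (x y : EuclideanSpace ℝ (Fin n)) (hx : ‖x‖ < 1) (hy : ‖y‖ < 1)
    (s : ℝ) (hs : s ∈ Ioo (0 : ℝ) 1) (hxy : ‖y - x‖ = s * (1 - ‖x‖)) :
    Real.log (1 + s) ≤ rhoB x y := by
  obtain ⟨hs0, hs1⟩ := hs
  have hr := norm_nonneg x
  have ht := norm_nonneg y
  have htri : ‖x‖ - ‖y‖ ≤ s * (1 - ‖x‖) := by
    have h := norm_sub_norm_le x y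
    rw [norm_sub_rev] at h
    linarith
  unfold rhoB
  rw [norm_sub_rev, hxy]
  generalize ‖x‖ = r at *
  generalize ‖y‖ = t at *
  obtain ⟨u, hu⟩ : ∃ u, u = Real.sqrt (1 + s) := ⟨_, rfl⟩
  have hu0 : 0 < u := by rw [hu]; positivity
  have hu2 : u ^ 2 = 1 + s := by rw [hu]; exact Real.sq_sqrt (by linarith)
  have hlog : Real.log (1 + s) = 2 * Real.log u := by
    rw [← hu2, Real.log_pow]; norm_num
  have hP : 0 < (1 - r ^ 2) * (1 - t ^ 2) := mul_pos (by nlinarith) (by nlinarith)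
  have hsq : Real.sqrt ((1 - r ^ 2) * (1 - t ^ 2)) ≤ 2 * u * (1 - r) := by
    apply Real.sqrt_le_iff.mpr
    refine ⟨mul_nonneg (by positivity) (by linarith), ?_⟩
    have e : (2 * u * (1 - r)) ^ 2 = (1 - r) * (4 * ((1 - r) * (1 + s))) := by
      rw [← hu2]; ring
    have e2 : (1 - r ^ 2) * (1 - t ^ 2) = (1 - r) * (((1 + r) * (1 + t)) * (1 - t)) := by ring
    rw [e, e2]
    apply mul_le_mul_of_nonneg_left _ (by linarith)
    exact mul_le_mul (by nlinarith) (by linarith) (by linarith) (by norm_num)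
  rw [hlog]
  apply mul_le_mul_of_nonneg_left _ (by norm_num : (0:ℝ) ≤ 2)
  rw [← Real.sinh_le_sinh, Real.sinh_arsinh, Real.sinh_log hu0,
    le_div_iff₀ (Real.sqrt_pos.mpr hP)]
  have hc : (u - u⁻¹) / 2 = s / (2 * u) := by
    field_simp
    linarith
  rw [hc]
  calc s / (2 * u) * Real.sqrt ((1 - r ^ 2) * (1 - t ^ 2))
      ≤ s / (2 * u) * (2 * u * (1 - r)) := mul_le_mul_of_nonneg_left hsq (by positivity)
    _ = s * (1 - r) := by field_simp
end

section
/- Let $s \in (0,1)$ and $C \geq 1$ be such that every positive harmonic function on the unit ball $\mathbb{B}^n$ satisfies the $(s, C)$-Harnack inequality in $\mathbb{B}^n$. Then for all $x, y \in \mathbb{B}^n$ the Harnack metric satisfies $h_{\mathbb{B}^n}(x,y) \leq \left(1 + \frac{\rho_{\mathbb{B}^n}(x,y)}{\log((1+s)/(1-s))}\right) \log C$, where $\rho_{\mathbb{B}^n}$ is the hyperbolic distance of the unit ball. -/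
open Metric Set

/-- `u` is harmonic on `G ⊆ ℝⁿ`: it is twice continuously differentiable on `G` and satisfies
the Laplace equation `∑ i, ∂²u/∂xᵢ² = 0` on `G`. -/
def IsHarmonicOn {n : ℕ} (u : EuclideanSpace ℝ (Fin n) → ℝ)
    (G : Set (EuclideanSpace ℝ (Fin n))) : Prop :=
  ContDiffOn ℝ 2 u G ∧ ∀ x ∈ G,
    ∑ i : Fin n, iteratedFDeriv ℝ 2 u x
      ![EuclideanSpace.single i 1, EuclideanSpace.single i 1] = 0

/-- The Harnack metric on a domain `G`: `h_G(x,y) = sup |log(u(x)/u(y))|`, the supremum being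
taken over all positive harmonic functions `u` on `G`. -/
noncomputable def harnackMetric {n : ℕ} (G : Set (EuclideanSpace ℝ (Fin n)))
    (x y : EuclideanSpace ℝ (Fin n)) : ℝ :=
  sSup {t : ℝ | ∃ u : EuclideanSpace ℝ (Fin n) → ℝ,
    (∀ z ∈ G, 0 < u z) ∧ IsHarmonicOn u G ∧ t = |Real.log (u x / u y)|}

lemma aux_dist {E : Type*} [NormedAddCommGroup E] [InnerProductSpace ℝ E]
    (a b ch : ℝ) (v w : E) (ha : 1 ≤ a) (hb : 1 ≤ b) (hch : 1 ≤ ch)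
    (hv : a ^ 2 - ‖v‖ ^ 2 = 1) (hw : b ^ 2 - ‖w‖ ^ 2 = 1)
    (hvw : a * b - inner ℝ v w = ch) :
    ‖(1 + b)⁻¹ • w - (a + ch)⁻¹ • v‖ ^ 2 = (ch ^ 2 - 1) / (a + ch) ^ 2 := by
  rw [norm_sub_sq_real, norm_smul, norm_smul, inner_smul_left, inner_smul_right,
    mul_pow, mul_pow, real_inner_comm]
  have h1 : ‖v‖ ^ 2 = a ^ 2 - 1 := by linarith
  have h2 : ‖w‖ ^ 2 = b ^ 2 - 1 := by linarith
  have h3 : inner ℝ v w = a * b - ch := by linarith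
  rw [h1, h2, h3, Real.norm_eq_abs, Real.norm_eq_abs, sq_abs, sq_abs]
  have : 1 + b ≠ 0 := by positivity
  have : a + ch ≠ 0 := by positivity
  simp only [conj_trivial]
  field_simp
  ring

lemma aux_step_s6 {n : ℕ} (u : EuclideanSpace ℝ (Fin n) → ℝ) (s C : ℝ)
    (hu : SatisfiesHarnack u (ball 0 1) s C) (hs : 0 < s)
    (a b b' δ : ℝ) (v w w' : EuclideanSpace ℝ (Fin n))
    (ha : 1 ≤ a) (hb : 1 ≤ b) (hb' : 1 ≤ b') (hδ : 0 ≤ δ)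
    (hv : a ^ 2 - ‖v‖ ^ 2 = 1) (hw : b ^ 2 - ‖w‖ ^ 2 = 1) (hw' : b' ^ 2 - ‖w'‖ ^ 2 = 1)
    (hvw : a * b - inner ℝ v w = Real.cosh δ) (hvw' : a * b' - inner ℝ v w' = Real.cosh δ)
    (hδs : Real.sinh δ ≤ s * Real.cosh δ) :
    u ((1 + b)⁻¹ • w) ≤ C * u ((1 + b')⁻¹ • w') := by
  have hch := Real.one_le_cosh δ
  have hsh : 0 ≤ Real.sinh δ := Real.sinh_nonneg_iff.2 hδ
  have hpos : 0 < a + Real.cosh δ := by positivity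
  have hva : ‖v‖ ≤ a := by
    exact abs_le_of_sq_le_sq (by linarith) (by linarith) |> fun h => (le_abs_self _).trans h
  have hc : ‖(a + Real.cosh δ)⁻¹ • v‖ = ‖v‖ / (a + Real.cosh δ) := by
    rw [norm_smul, Real.norm_eq_abs, abs_of_pos (inv_pos.2 hpos)]; field_simp
  have hc1 : ‖(a + Real.cosh δ)⁻¹ • v‖ < 1 := by
    rw [hc, div_lt_one hpos]; linarith
  have key : ∀ (b : ℝ) (w : EuclideanSpace ℝ (Fin n)), 1 ≤ b → b ^ 2 - ‖w‖ ^ 2 = 1 →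
      a * b - inner ℝ v w = Real.cosh δ →
      (1 + b)⁻¹ • w ∈ closedBall ((a + Real.cosh δ)⁻¹ • v)
        (s * (1 - ‖(a + Real.cosh δ)⁻¹ • v‖)) := by
    intro b w hb hw hvw
    have h := aux_dist a b _ v w ha hb hch hv hw hvw
    rw [mem_closedBall, dist_eq_norm]
    have h2 : ‖(1 + b)⁻¹ • w - (a + Real.cosh δ)⁻¹ • v‖ = Real.sinh δ / (a + Real.cosh δ) := by
      rw [← sq_eq_sq₀ (norm_nonneg _) (by positivity), h, div_pow, Real.sinh_sq]
    rw [h2, hc, div_le_iff₀ hpos]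
    have : s * (1 - ‖v‖ / (a + Real.cosh δ)) * (a + Real.cosh δ)
        = s * (a - ‖v‖) + s * Real.cosh δ := by field_simp; ring
    rw [this]
    nlinarith
  refine hu _ (by simpa using hc1) (1 - ‖(a + Real.cosh δ)⁻¹ • v‖) (by linarith) ?_ _
    (key b w hb hw hvw) _ (key b' w' hb' hw' hvw')
  apply ball_subset_ball'
  rw [dist_zero_right]; linarith

lemma aux_main {n : ℕ} (u : EuclideanSpace ℝ (Fin n) → ℝ) (s C : ℝ)
    (hu : SatisfiesHarnack u (ball 0 1) s C) (hs : 0 < s) (hC : 1 ≤ C)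
    (A B δ : ℝ) (X W : EuclideanSpace ℝ (Fin n)) (hA : 1 ≤ A) (hδ : 0 ≤ δ)
    (hX : A ^ 2 - ‖X‖ ^ 2 = 1) (hW : B ^ 2 - ‖W‖ ^ 2 = -1) (hXW : A * B - inner ℝ X W = 0)
    (hδs : Real.sinh δ ≤ s * Real.cosh δ) (p : ℝ → EuclideanSpace ℝ (Fin n))
    (hp : ∀ t, p t = (1 + (Real.cosh t * A + Real.sinh t * B))⁻¹ •
      (Real.cosh t • X + Real.sinh t • W)) (k : ℕ) :
    u (p 0) ≤ C ^ k * u (p (k * (2 * δ))) ∧ u (p (k * (2 * δ))) ≤ C ^ k * u (p 0) := by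
  have hip : ∀ t r, (Real.cosh t * A + Real.sinh t * B) * (Real.cosh r * A + Real.sinh r * B)
      - inner ℝ (Real.cosh t • X + Real.sinh t • W) (Real.cosh r • X + Real.sinh r • W)
      = Real.cosh (t - r) := by
    intro t r
    simp only [inner_add_left, inner_add_right, inner_smul_left, inner_smul_right,
      real_inner_self_eq_norm_sq, conj_trivial, real_inner_comm X W]
    rw [Real.cosh_sub]
    linear_combination (Real.cosh t * Real.cosh r) * hX + Real.sinh t * Real.sinh r * hW
      + (Real.cosh t * Real.sinh r + Real.sinh t * Real.cosh r) * hXW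
  have hnorm : ∀ t, (Real.cosh t * A + Real.sinh t * B) ^ 2
      - ‖Real.cosh t • X + Real.sinh t • W‖ ^ 2 = 1 := by
    intro t
    have := hip t t
    rw [real_inner_self_eq_norm_sq, sub_self, Real.cosh_zero] at this
    linarith
  have hBA : |B| ≤ A := by
    apply abs_le_of_sq_le_sq _ (by linarith) 
    have h1 := real_inner_mul_inner_self_le X W
    rw [real_inner_self_eq_norm_sq, real_inner_self_eq_norm_sq] at h1
    have h2 : inner ℝ X W = A * B := by linarith
    have h3 : ‖X‖ ^ 2 = A ^ 2 - 1 := by linarith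
    have h4 : ‖W‖ ^ 2 = B ^ 2 + 1 := by linarith
    rw [h2, h3, h4] at h1
    nlinarith
  have hge : ∀ t, 1 ≤ Real.cosh t * A + Real.sinh t * B := by
    intro t
    have h0 : 0 ≤ Real.cosh t * A + Real.sinh t * B := by
      have h1 : |Real.sinh t| ≤ Real.cosh t := by
        apply abs_le_of_sq_le_sq _ (Real.cosh_pos t).le
        rw [Real.sinh_sq]; linarith
      have h2 : |Real.sinh t * B| ≤ Real.cosh t * A := by
        rw [abs_mul]; exact mul_le_mul h1 hBA (abs_nonneg _) (Real.cosh_pos t).le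
      linarith [neg_abs_le (Real.sinh t * B)]
    have := hnorm t
    nlinarith [sq_nonneg ‖Real.cosh t • X + Real.sinh t • W‖]
  have step : ∀ t ε, |ε| = δ → u (p (t - ε)) ≤ C * u (p (t + ε)) := by
    intro t ε hε
    have hcosh : Real.cosh ε = Real.cosh δ := by rw [← hε, Real.cosh_abs]
    rw [hp, hp]
    refine aux_step_s6 u s C hu hs _ _ _ δ _ _ _ (hge t) (hge _) (hge _) hδ (hnorm t) (hnorm _)
      (hnorm _) ?_ ?_ hδs
    · rw [hip, ← hcosh]; congr 1; ring
    · rw [hip, ← hcosh, ← Real.cosh_neg ε]; congr 1; ring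
  induction k with
  | zero => simp
  | succ k ih =>
    have h1 := step (k * (2 * δ) + δ) δ (abs_of_nonneg hδ)
    have h2 := step (k * (2 * δ) + δ) (-δ) (by rw [abs_neg, abs_of_nonneg hδ])
    have e1 : (k:ℝ) * (2 * δ) + δ - δ = k * (2 * δ) := by ring
    have e2 : (k:ℝ) * (2 * δ) + δ + δ = (k + 1 : ℕ) * (2 * δ) := by push_cast; ring
    rw [e1, e2] at h1
    rw [sub_neg_eq_add, ← sub_eq_add_neg, e1, e2] at h2
    have hCk : 0 ≤ C ^ k := by positivity
    constructor
    · calc _ ≤ _ := ih.1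
        _ ≤ C ^ k * (C * u (p ((k + 1 : ℕ) * (2 * δ)))) := by gcongr
        _ = _ := by ring
    · calc _ ≤ _ := h2
        _ ≤ C * (C ^ k * u (p 0)) := by gcongr; exact ih.2
        _ = _ := by ring

/-- If every positive harmonic function on the unit ball `𝔹ⁿ` satisfies the `(s, C)`-Harnack
inequality in `𝔹ⁿ`, then the Harnack metric satisfies
`h(x,y) ≤ (1 + ρ(x,y)/log((1+s)/(1-s))) log C` for all `x, y ∈ 𝔹ⁿ`. -/
theorem stmt_6 {n : ℕ} (s C : ℝ) (hs : s ∈ Ioo (0 : ℝ) 1) (hC : 1 ≤ C)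
    (hH : ∀ u : EuclideanSpace ℝ (Fin n) → ℝ,
      (∀ z ∈ ball (0 : EuclideanSpace ℝ (Fin n)) 1, 0 < u z) →
      IsHarmonicOn u (ball (0 : EuclideanSpace ℝ (Fin n)) 1) →
      SatisfiesHarnack u (ball (0 : EuclideanSpace ℝ (Fin n)) 1) s C)
    (x y : EuclideanSpace ℝ (Fin n))
    (hx : x ∈ ball (0 : EuclideanSpace ℝ (Fin n)) 1)
    (hy : y ∈ ball (0 : EuclideanSpace ℝ (Fin n)) 1) :
    harnackMetric (ball (0 : EuclideanSpace ℝ (Fin n)) 1) x y ≤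
      (1 + rhoB x y / Real.log ((1 + s) / (1 - s))) * Real.log C := by
  have hs0 := hs.1
  have hs1 := hs.2
  have hL : 0 < Real.log ((1 + s) / (1 - s)) := by
    apply Real.log_pos
    rw [lt_div_iff₀ (by linarith)]; linarith
  have hlC : 0 ≤ Real.log C := Real.log_nonneg hC
  have hx1 : ‖x‖ < 1 := by simpa using hx
  have hy1 : ‖y‖ < 1 := by simpa using hy
  have hx2 : 0 < 1 - ‖x‖ ^ 2 := by nlinarith [norm_nonneg x]
  have hy2 : 0 < 1 - ‖y‖ ^ 2 := by nlinarith [norm_nonneg y]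
  have hd0 : 0 ≤ rhoB x y := by
    unfold rhoB
    have := Real.arsinh_nonneg_iff.2
      (show 0 ≤ ‖x - y‖ / Real.sqrt ((1 - ‖x‖ ^ 2) * (1 - ‖y‖ ^ 2)) by positivity)
    linarith
  have hR : 0 ≤ (1 + rhoB x y / Real.log ((1 + s) / (1 - s))) * Real.log C := by positivity
  apply Real.sSup_le _ hR
  rintro t ⟨u, hup, huh, rfl⟩
  have hu := hH u hup huh
  by_cases hxy : x = y
  · subst hxy
    rw [div_self (hup x hx).ne']; simpa using hR
  have hcosh : Real.cosh (rhoB x y) =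
      1 + 2 * ‖x - y‖ ^ 2 / ((1 - ‖x‖ ^ 2) * (1 - ‖y‖ ^ 2)) := by
    unfold rhoB
    rw [Real.cosh_two_mul, Real.cosh_sq, Real.sinh_arsinh, div_pow, Real.sq_sqrt (by positivity)]
    ring
  have hdpos : 0 < rhoB x y := by
    unfold rhoB
    have : 0 < ‖x - y‖ := norm_pos_iff.2 (sub_ne_zero.2 hxy)
    have := Real.arsinh_pos_iff.2
      (show 0 < ‖x - y‖ / Real.sqrt ((1 - ‖x‖ ^ 2) * (1 - ‖y‖ ^ 2)) by positivity)
    linarith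
  set d := rhoB x y with hd
  set L := Real.log ((1 + s) / (1 - s)) with hLdef
  have hsh : 0 < Real.sinh d := Real.sinh_pos_iff.2 hdpos
  set k := ⌈d / L⌉₊ with hk
  have hkpos : 0 < k := Nat.ceil_pos.2 (by positivity)
  have hk0 : (0:ℝ) < k := by exact_mod_cast hkpos
  have hk1 : (k:ℝ) < d / L + 1 := Nat.ceil_lt_add_one (by positivity)
  have hk2 : d / L ≤ k := Nat.le_ceil _
  set δ := d / k / 2 with hδ
  have hδ0 : 0 ≤ δ := by positivity
  have hδL : 2 * δ ≤ L := by
    rw [div_le_iff₀ hL] at hk2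
    have : 2 * δ = d / k := by rw [hδ]; ring
    rw [this, div_le_iff₀ hk0]; linarith
  have hkd : (k:ℝ) * (2 * δ) = d := by rw [hδ]; field_simp
  have hδs : Real.sinh δ ≤ s * Real.cosh δ := by
    have h1 : Real.exp (2 * δ) ≤ (1 + s) / (1 - s) := by
      rw [← Real.le_log_iff_exp_le (by apply div_pos <;> linarith)]; exact hδL
    rw [le_div_iff₀ (by linarith)] at h1
    have h2 : Real.exp (2 * δ) = Real.exp δ * Real.exp δ := by rw [← Real.exp_add]; ring_nf
    have h3 : Real.exp δ * Real.exp (-δ) = 1 := by rw [← Real.exp_add]; simp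
    have h4 := Real.exp_pos (-δ)
    rw [Real.sinh_eq, Real.cosh_eq]
    rw [h2] at h1
    have h5 := mul_le_mul_of_nonneg_right h1 h4.le
    have h6 : Real.exp δ * Real.exp δ * (1 - s) * Real.exp (-δ) = Real.exp δ * (1 - s) := by
      linear_combination Real.exp δ * (1 - s) * h3
    rw [h6] at h5
    linarith
  have hip : (1 + ‖x‖ ^ 2) / (1 - ‖x‖ ^ 2) * ((1 + ‖y‖ ^ 2) / (1 - ‖y‖ ^ 2))
      - inner ℝ ((2 / (1 - ‖x‖ ^ 2)) • x) ((2 / (1 - ‖y‖ ^ 2)) • y) = Real.cosh d := by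
    rw [hcosh, inner_smul_left, inner_smul_right, norm_sub_sq_real]
    simp only [conj_trivial]
    field_simp
    ring
  have hn : ∀ z : EuclideanSpace ℝ (Fin n), 0 < 1 - ‖z‖ ^ 2 →
      ((1 + ‖z‖ ^ 2) / (1 - ‖z‖ ^ 2)) ^ 2 - ‖(2 / (1 - ‖z‖ ^ 2)) • z‖ ^ 2 = 1 := by
    intro z hz
    rw [norm_smul, mul_pow, Real.norm_eq_abs, sq_abs]
    field_simp
    ring
  have hpt : ∀ z : EuclideanSpace ℝ (Fin n), 0 < 1 - ‖z‖ ^ 2 →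
      (1 + (1 + ‖z‖ ^ 2) / (1 - ‖z‖ ^ 2))⁻¹ • ((2 / (1 - ‖z‖ ^ 2)) • z) = z := by
    intro z hz
    rw [smul_smul]
    have : (1 + (1 + ‖z‖ ^ 2) / (1 - ‖z‖ ^ 2)) = 2 / (1 - ‖z‖ ^ 2) := by field_simp; ring
    rw [this, inv_mul_cancel₀ (by positivity), one_smul]
  have hnx := hn x hx2
  have hny := hn y hy2
  have hpx := hpt x hx2
  have hpy := hpt y hy2
  have hA : 1 ≤ (1 + ‖x‖ ^ 2) / (1 - ‖x‖ ^ 2) := by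
    rw [le_div_iff₀ hx2]; nlinarith [norm_nonneg x]
  generalize (1 + ‖x‖ ^ 2) / (1 - ‖x‖ ^ 2) = A at *
  generalize (1 + ‖y‖ ^ 2) / (1 - ‖y‖ ^ 2) = A' at *
  generalize (2 / (1 - ‖x‖ ^ 2)) • x = X at *
  generalize (2 / (1 - ‖y‖ ^ 2)) • y = Y at *
  have hcs := Real.cosh_sq d
  have hmain := aux_main u s C hu hs0 hC A ((A' - Real.cosh d * A) / Real.sinh d) δ X
    ((Real.sinh d)⁻¹ • (Y - Real.cosh d • X)) hA hδ0 hnx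
    (by
      rw [norm_smul, mul_pow, Real.norm_eq_abs, sq_abs, norm_sub_sq_real, norm_smul, mul_pow,
        Real.norm_eq_abs, sq_abs, inner_smul_right, real_inner_comm]
      field_simp
      linear_combination hny + Real.cosh d ^ 2 * hnx - 2 * Real.cosh d * hip - hcs)
    (by
      rw [inner_smul_right, inner_sub_right, inner_smul_right, real_inner_self_eq_norm_sq]
      field_simp
      linear_combination hip - Real.cosh d * hnx) hδs _ (fun t => rfl) k
  rw [hkd] at hmain
  have e1 : Real.cosh d * A + Real.sinh d * ((A' - Real.cosh d * A) / Real.sinh d) = A' := by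
    field_simp; ring
  have e2 : Real.cosh d • X + Real.sinh d • (Real.sinh d)⁻¹ • (Y - Real.cosh d • X) = Y := by
    rw [smul_smul, mul_inv_cancel₀ hsh.ne', one_smul]; abel
  simp only [e1, e2, hpy, Real.cosh_zero, Real.sinh_zero, one_mul, zero_mul, add_zero, one_smul,
    zero_smul, hpx] at hmain
  have hux := hup x hx
  have huy := hup y hy
  have hCk : 0 < C ^ k := by positivity
  have l1 := Real.log_le_log hux hmain.1
  have l2 := Real.log_le_log huy hmain.2
  rw [Real.log_mul hCk.ne' huy.ne', Real.log_pow] at l1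
  rw [Real.log_mul hCk.ne' hux.ne', Real.log_pow] at l2
  rw [Real.log_div hux.ne' huy.ne']
  have : (k:ℝ) * Real.log C ≤ (1 + d / L) * Real.log C := by
    apply mul_le_mul_of_nonneg_right _ hlC; linarith
  rw [abs_le]; constructor <;> linarith
end

section
/- For all real numbers $r, R$ with $0 < r < R$, $\int_{-\pi}^{\pi} \frac{|\cos\theta|}{R^2 + r^2 - 2rR\cos\theta}\, \mathrm{d}\theta = \frac{2(R^2+r^2)}{rR(R^2-r^2)} \arctan\left( \frac{2rR}{R^2-r^2} \right)$. -/
/-- For `0 < r < R`,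
`∫_{-π}^{π} |cos θ| / (R² + r² - 2rR cos θ) dθ
  = (2(R²+r²))/(rR(R²-r²)) · arctan(2rR/(R²-r²))`. -/
theorem stmt_9 (r R : ℝ) (hr : 0 < r) (hrR : r < R) :
    ∫ θ in (-Real.pi)..Real.pi,
        |Real.cos θ| / (R ^ 2 + r ^ 2 - 2 * r * R * Real.cos θ) =
      2 * (R ^ 2 + r ^ 2) / (r * R * (R ^ 2 - r ^ 2)) *
        Real.arctan (2 * r * R / (R ^ 2 - r ^ 2)) := by
  have hR : 0 < R := hr.trans hrR
  have hrr : 0 < r * R := mul_pos hr hR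
  have hc : 0 < R ^ 2 - r ^ 2 := by nlinarith
  have hm : ∀ θ : ℝ, 0 < R ^ 2 + r ^ 2 - 2 * r * R * Real.cos θ := fun θ => by
    nlinarith [Real.cos_le_one θ, mul_nonneg hrr.le (sub_nonneg.2 (Real.cos_le_one θ)),
      mul_pos (sub_pos.2 hrR) (sub_pos.2 hrR)]
  have hp : ∀ θ : ℝ, 0 < R ^ 2 + r ^ 2 + 2 * r * R * Real.cos θ := fun θ => by
    have := hm (θ + Real.pi)
    rw [Real.cos_add_pi] at this
    linarith
  have hcm : Continuous fun θ : ℝ =>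
      |Real.cos θ| / (R ^ 2 + r ^ 2 - 2 * r * R * Real.cos θ) :=
    Continuous.div (by fun_prop) (by fun_prop) fun θ => (hm θ).ne'
  have hcp : Continuous fun θ : ℝ =>
      |Real.cos θ| / (R ^ 2 + r ^ 2 + 2 * r * R * Real.cos θ) :=
    Continuous.div (by fun_prop) (by fun_prop) fun θ => (hp θ).ne'
  have hper : Function.Periodic (fun θ : ℝ =>
      |Real.cos θ| / (R ^ 2 + r ^ 2 - 2 * r * R * Real.cos θ)) (2 * Real.pi) := fun θ => by
    simp only [Real.cos_add_two_pi]
  have h1 := hper.intervalIntegral_add_eq (-Real.pi) (-(Real.pi / 2))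
  rw [show -Real.pi + 2 * Real.pi = Real.pi by ring] at h1
  rw [h1, ← intervalIntegral.integral_add_adjacent_intervals
    (hcm.intervalIntegrable (-(Real.pi / 2)) (Real.pi / 2)) (hcm.intervalIntegrable _ _)]
  have h2 := intervalIntegral.integral_comp_add_right (a := -(Real.pi / 2)) (b := Real.pi / 2)
    (fun θ : ℝ => |Real.cos θ| / (R ^ 2 + r ^ 2 - 2 * r * R * Real.cos θ)) Real.pi
  rw [show -(Real.pi / 2) + Real.pi = Real.pi / 2 by ring,
    show Real.pi / 2 + Real.pi = -(Real.pi / 2) + 2 * Real.pi by ring] at h2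
  simp only [Real.cos_add_pi, abs_neg, mul_neg, sub_neg_eq_add] at h2
  rw [← h2, ← intervalIntegral.integral_add (hcm.intervalIntegrable _ _)
    (hcp.intervalIntegrable _ _)]
  refine (intervalIntegral.integral_eq_sub_of_hasDerivAt (f := fun θ =>
    (R ^ 2 + r ^ 2) / (r * R * (R ^ 2 - r ^ 2)) *
      Real.arctan (2 * r * R / (R ^ 2 - r ^ 2) * Real.sin θ))
    ?_ ((hcm.add hcp).intervalIntegrable _ _)).trans ?_
  rotate_left
  · simp only [Real.sin_neg, Real.sin_pi_div_two, mul_neg, mul_one, Real.arctan_neg]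
    ring
  · intro θ hθ
    rw [Set.uIcc_of_le (by linarith [Real.pi_pos])] at hθ
    have hcos := Real.cos_nonneg_of_mem_Icc hθ
    have hd := (((Real.hasDerivAt_sin θ).const_mul (2 * r * R / (R ^ 2 - r ^ 2))).arctan).const_mul
      ((R ^ 2 + r ^ 2) / (r * R * (R ^ 2 - r ^ 2)))
    refine hd.congr_deriv ?_
    symm
    show |Real.cos θ| / (R ^ 2 + r ^ 2 - 2 * r * R * Real.cos θ) +
      |Real.cos θ| / (R ^ 2 + r ^ 2 + 2 * r * R * Real.cos θ) = _
    rw [abs_of_nonneg hcos]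
    have e : 1 + (2 * r * R / (R ^ 2 - r ^ 2) * Real.sin θ) ^ 2 =
        (R ^ 2 + r ^ 2 - 2 * r * R * Real.cos θ) * (R ^ 2 + r ^ 2 + 2 * r * R * Real.cos θ)
          / (R ^ 2 - r ^ 2) ^ 2 := by
      rw [mul_pow, Real.sin_sq]
      field_simp
      ring
    rw [e]
    have := (hm θ).ne'
    have := (hp θ).ne'
    generalize Real.cos θ = x at *
    rw [div_add_div _ _ ‹_› ‹_›]
    field_simp
    ring
end
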